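/- arXiv:2504.17245 — 2 statements merged into one kernel-verified Lean document; each statement's English description precedes it below -/
import Mathlib

section
/- Define, in F = ℚ(u, t), for integers 0 ≤ i ≤ j: m_{ij} = t^{−i} u^{−j(j+1)/2 + (j−i)(j−i+2)/4} (∏_{r=i+1}^{j}(u^{r} − 1)) / (∏_{r=1}^{(j−i)/2}(u^{2r} − 1)) if j − i is even, and m_{ij} = t^{−i} u^{−j(j+1)/2 + ((j−i)^2 − 1)/4} (∏_{r=i+1}^{j}(u^{r} − 1)) / (∏_{r=1}^{(j−i−1)/2}(u^{2r} − 1)) if j − i is odd. Define b_{ij} = 0 for i > j and, for 0 ≤ i ≤ j: b_{ij} = (−1)^{(j−i)/2} t^{j−i} (1 − u^{j+1} t) (∏_{k=i+1}^{j}(u^{k} − 1)) / ((1 − u^{i+1} t) ∏_{k=1}^{(j−i)/2}(1 − u^{2i+1+2k} t^{2})(u^{2k} − 1)) if j − i is even, and b_{ij} = (−1)^{(j−i+1)/2} t^{j−i} (∏_{k=i+1}^{j}(u^{k} − 1)) / ((1 − u^{i+1} t) ∏_{k=1}^{(j−i−1)/2}(1 − u^{2i+1+2k} t^{2})(u^{2k}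 − 1)) if j − i is odd. Then b_{ii} = 1 for every i ≥ 0, and for all integers 0 ≤ i < j one has b_{ij} = (t^{j} u^{j(j+1)/2} / (u^{(j−i)(j+i+1)/2} t^{j−i} − 1)) · ∑_{k=i}^{j−1} m_{kj} b_{ik}. (This says the displayed closed formulas solve the defining recursion of the coefficients b_{χ₀}(s)_{ij} of the U(p)-eigenfunction decomposition of Siegel Eisenstein series for the trivial character, under the substitution u = p, t = p^{−s}.) -/
/-- `F = ℚ(u, t)`, the field of rational functions in two independent
indeterminates over `ℚ`; `u` stands for the odd prime `p` and `t` for `p^{−s}`. -/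
noncomputable abbrev Fut : Type := FractionRing (MvPolynomial (Fin 2) ℚ)

/-- The indeterminate `u` viewed inside `Fut`. -/
noncomputable def U : Fut := algebraMap (MvPolynomial (Fin 2) ℚ) Fut (MvPolynomial.X 0)

/-- The indeterminate `t` viewed inside `Fut`. -/
noncomputable def T : Fut := algebraMap (MvPolynomial (Fin 2) ℚ) Fut (MvPolynomial.X 1)

/-!
Write `(a; q)_n` for the `q`-Pochhammer symbol. After removing the factors that telescope,
`m_{kj}` becomes `1 / (u⁻²; u⁻²)_⌊(j - k) / 2⌋` and `b_{i, i + n}` becomes a coefficient `c_n` that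
depends only on `y = u ^ i * t`, and the recursion says that
`∑ a ≤ n, c_a / (u⁻²; u⁻²)_⌊(n - a) / 2⌋ = u ^ (n * (n + 1) / 2) * y ^ n * c_n`.
Grouping the terms `a = 2 * x` and `a = 2 * x + 1` turns the left-hand side into a multiple of the
terminating `q`-Chu–Vandermonde sum in base `q = u ^ 2` with one upper parameter equal to `0`. That
sum is evaluated by induction on its length `N`, splitting
`1 - q ^ N = (1 - q ^ a) + q ^ a * (1 - q ^ d)` for `a + d = N`.
-/

open Finset

section QPochhammer

variable {R : Type*} [CommRing R] (a q : R) (n : ℕ)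

/-- The `q`-Pochhammer symbol `(a; q)_n = (1 - a) (1 - a q) ⋯ (1 - a q ^ (n - 1))`. -/
def qPochhammer : R := ∏ r ∈ range n, (1 - a * q ^ r)

@[simp]
lemma qPochhammer_zero : qPochhammer a q 0 = 1 := prod_range_zero _

lemma qPochhammer_succ :
    qPochhammer a q (n + 1) = qPochhammer a q n * (1 - a * q ^ n) :=
  prod_range_succ _ n

lemma qPochhammer_succ' :
    qPochhammer a q (n + 1) = (1 - a) * qPochhammer (a * q) q n := by
  simp only [qPochhammer, prod_range_succ', pow_zero, mul_one, mul_comm (1 - a), pow_succ',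
    mul_assoc]

lemma qPochhammer_self_succ :
    qPochhammer q q (n + 1) = qPochhammer q q n * (1 - q ^ (n + 1)) := by
  rw [qPochhammer_succ, pow_succ']

variable {a q} in
lemma qPochhammer_ne_zero [IsDomain R] (h : ∀ k, a * q ^ k ≠ 1) : qPochhammer a q n ≠ 0 :=
  prod_ne_zero_iff.2 fun k _ ↦ sub_ne_zero.2 (h k).symm

variable {q} in
lemma qPochhammer_self_ne_zero [IsDomain R] (h : ∀ k ≠ 0, q ^ k ≠ 1) : qPochhammer q q n ≠ 0 :=
  qPochhammer_ne_zero n fun k ↦ pow_succ' q k ▸ h _ k.succ_ne_zero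

lemma prod_Icc_one_sub_mul_mul_pow_sub_one :
    ∏ k ∈ Icc 1 n, ((1 - a * q ^ k) * (q ^ k - 1)) =
      (-1) ^ n * (qPochhammer q q n * qPochhammer (a * q) q n) := by
  induction n with
  | zero => simp
  | succ n ih =>
    rw [prod_Icc_succ_top (Nat.le_add_left 1 n), ih, qPochhammer_self_succ, qPochhammer_succ]
    ring

end QPochhammer

section Field

variable {K : Type*} [Field K]

lemma one_sub_pow_div_qPochhammer_self_succ {q : K} {n : ℕ} (h : q ^ (n + 1) ≠ 1) :
    (1 - q ^ (n + 1)) / qPochhammer q q (n + 1) = 1 / qPochhammer q q n := by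
  rw [qPochhammer_self_succ, mul_comm, div_mul_cancel_left₀ (sub_ne_zero.2 h.symm), one_div]

lemma inv_pow_ne_one {q : K} (hq : ∀ k ≠ 0, q ^ k ≠ 1) : ∀ k ≠ 0, q⁻¹ ^ k ≠ 1 := fun k hk ↦ by
  rw [inv_pow]
  exact inv_ne_one.2 (hq k hk)

lemma prod_Icc_sq_pow_sub_one {q : K} (hq : q ≠ 0) (n : ℕ) :
    ∏ r ∈ Icc 1 n, ((q ^ 2) ^ r - 1) =
      q ^ (n * (n + 1)) * qPochhammer (q ^ 2)⁻¹ (q ^ 2)⁻¹ n := by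
  induction n with
  | zero => simp
  | succ n ih =>
    rw [prod_Icc_succ_top (Nat.le_add_left 1 n), ih, qPochhammer_self_succ, inv_pow]
    field_simp
    ring

/-- The `q`-Chu–Vandermonde sum `₂φ₁(q⁻ᴺ, 0; b; q, q)`, divided by `(q⁻¹; q⁻¹)_N`. -/
def qVandermondeSum (q b : K) (N : ℕ) : K :=
  ∑ p ∈ antidiagonal N,
    q ^ p.1 / (qPochhammer q q p.1 * qPochhammer b q p.1 * qPochhammer q⁻¹ q⁻¹ p.2)

lemma qVandermondeSum_succ {q : K} (hq0 : q ≠ 0) (hq : ∀ k ≠ 0, q ^ k ≠ 1) (b : K) (N : ℕ) :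
    (1 - q ^ (N + 1)) * qVandermondeSum q b (N + 1) =
      q / (1 - b) * qVandermondeSum q (b * q) N - q ^ (N + 1) * qVandermondeSum q b N := by
  set f : ℕ × ℕ → K := fun p ↦
    q ^ p.1 / (qPochhammer q q p.1 * qPochhammer b q p.1 * qPochhammer q⁻¹ q⁻¹ p.2) with hf
  have split : (1 - q ^ (N + 1)) * qVandermondeSum q b (N + 1) =
      ∑ p ∈ antidiagonal (N + 1), (1 - q ^ p.1) * f p -
        q ^ (N + 1) * ∑ p ∈ antidiagonal (N + 1), (1 - q⁻¹ ^ p.2) * f p := by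
    rw [qVandermondeSum, mul_sum, mul_sum, ← sum_sub_distrib]
    refine sum_congr rfl fun p hp ↦ ?_
    rw [← mem_antidiagonal.1 hp, pow_add, inv_pow, hf]
    field_simp
    ring
  have lower_fst : ∑ p ∈ antidiagonal (N + 1), (1 - q ^ p.1) * f p =
      q / (1 - b) * qVandermondeSum q (b * q) N := by
    rw [Nat.sum_antidiagonal_succ, pow_zero, sub_self, zero_mul, zero_add, qVandermondeSum, mul_sum]
    refine sum_congr rfl fun p _ ↦ ?_
    have cancel := one_sub_pow_div_qPochhammer_self_succ (hq _ p.1.succ_ne_zero)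
    simp only [hf, qPochhammer_succ' b]
    generalize 1 - b = c
    linear_combination
      q ^ (p.1 + 1) / (c * qPochhammer (b * q) q p.1 * qPochhammer q⁻¹ q⁻¹ p.2) * cancel
  have lower_snd : ∑ p ∈ antidiagonal (N + 1), (1 - q⁻¹ ^ p.2) * f p = qVandermondeSum q b N := by
    rw [Nat.sum_antidiagonal_succ', pow_zero, sub_self, zero_mul, zero_add, qVandermondeSum]
    refine sum_congr rfl fun p _ ↦ ?_
    have cancel := one_sub_pow_div_qPochhammer_self_succ (inv_pow_ne_one hq _ p.2.succ_ne_zero)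
    simp only [hf]
    linear_combination q ^ p.1 / (qPochhammer q q p.1 * qPochhammer b q p.1) * cancel
  rw [split, lower_fst, lower_snd]

theorem qVandermondeSum_eq {q b : K} (hq0 : q ≠ 0) (hq : ∀ k ≠ 0, q ^ k ≠ 1)
    (hb : ∀ k, b * q ^ k ≠ 1) (N : ℕ) :
    qVandermondeSum q b N =
      q ^ (N ^ 2) * b ^ N / (qPochhammer q q N * qPochhammer b q N) := by
  induction N generalizing b with
  | zero => simp [qVandermondeSum]
  | succ N ih =>
    have hbq : ∀ k, b * q * q ^ k ≠ 1 := fun k ↦ by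
      rw [mul_assoc, ← pow_succ']
      exact hb (k + 1)
    have hqN : 1 - q ^ (N + 1) ≠ 0 := sub_ne_zero.2 (hq _ N.succ_ne_zero).symm
    have hbN : 1 - b * q ^ N ≠ 0 := sub_ne_zero.2 (hb N).symm
    have hP := qPochhammer_self_ne_zero N hq
    have hPb := qPochhammer_ne_zero N hb
    have shift : (1 - b) * qPochhammer (b * q) q N = qPochhammer b q N * (1 - b * q ^ N) := by
      rw [← qPochhammer_succ', qPochhammer_succ]
    apply mul_left_cancel₀ hqN
    rw [qVandermondeSum_succ hq0 hq, ih hb, ih hbq, div_mul_div_comm, mul_left_comm (1 - b),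
      shift, qPochhammer_self_succ, qPochhammer_succ]
    field_simp
    ring

lemma sum_range_two_mul {M : Type*} [AddCommMonoid M] (f : ℕ → M) (n : ℕ) :
    ∑ a ∈ range (2 * n), f a = ∑ x ∈ range n, (f (2 * x) + f (2 * x + 1)) := by
  induction n with
  | zero => simp
  | succ n ih => rw [mul_add_one, sum_range_succ, sum_range_succ, ih, sum_range_succ, add_assoc]

/-- The part of `b_{i, i + n}` that does not telescope in the recursion; it depends on `i` and `t`
only through `y = u ^ i * t`. -/
def reducedCoeff (u y : K) (n : ℕ) : K :=
  (if Even n then 1 - u ^ (n + 1) * y else -1) /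
    (qPochhammer (u ^ 2) (u ^ 2) (n / 2) * qPochhammer (u * y ^ 2 * u ^ 2) (u ^ 2) (n / 2))

lemma reducedCoeff_two_mul (u y : K) (d : ℕ) :
    reducedCoeff u y (2 * d) = (1 - u ^ (2 * d + 1) * y) /
      (qPochhammer (u ^ 2) (u ^ 2) d * qPochhammer (u * y ^ 2 * u ^ 2) (u ^ 2) d) := by
  rw [reducedCoeff, if_pos (even_two_mul d), Nat.mul_div_cancel_left d two_pos]

lemma reducedCoeff_two_mul_add_one (u y : K) (d : ℕ) :
    reducedCoeff u y (2 * d + 1) =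
      -1 / (qPochhammer (u ^ 2) (u ^ 2) d * qPochhammer (u * y ^ 2 * u ^ 2) (u ^ 2) d) := by
  rw [reducedCoeff, if_neg (Nat.not_even_two_mul_add_one d), show (2 * d + 1) / 2 = d by lia]

section Reduced

variable {u : K}

lemma sq_pow_ne_one (hu : ∀ k ≠ 0, u ^ k ≠ 1) : ∀ k ≠ 0, (u ^ 2) ^ k ≠ 1 := fun k hk ↦ by
  rw [← pow_mul]
  exact hu _ (mul_ne_zero two_ne_zero hk)

lemma sum_reducedCoeff_div_qPochhammer_two_mul (hu0 : u ≠ 0) (hu : ∀ k ≠ 0, u ^ k ≠ 1)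
    (y : K) (N : ℕ) :
    ∑ a ∈ range (2 * N + 1),
        reducedCoeff u y a / qPochhammer (u ^ 2)⁻¹ (u ^ 2)⁻¹ ((2 * N - a) / 2) =
      ((u ^ 2)⁻¹ ^ N - u * y) * qVandermondeSum (u ^ 2) (u * y ^ 2 * u ^ 2) N := by
  rw [qVandermondeSum, Nat.sum_antidiagonal_eq_sum_range_succ_mk, sum_range_succ, sum_range_succ,
    sum_range_two_mul, mul_add, mul_sum]
  congr 1
  · refine sum_congr rfl fun x hx ↦ ?_
    obtain ⟨d, rfl⟩ := Nat.exists_eq_add_of_lt (mem_range.1 hx)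
    have cancel := one_sub_pow_div_qPochhammer_self_succ
      (inv_pow_ne_one (sq_pow_ne_one hu) _ d.succ_ne_zero)
    rw [reducedCoeff_two_mul, reducedCoeff_two_mul_add_one,
      show (2 * (x + d + 1) - 2 * x) / 2 = d + 1 by lia,
      show (2 * (x + d + 1) - (2 * x + 1)) / 2 = d by lia, show x + d + 1 - x = d + 1 by lia,
      div_eq_mul_one_div _ (qPochhammer _ _ d), ← cancel]
    simp only [inv_pow]
    field_simp
    ring
  · simp only [Nat.sub_self, Nat.zero_div, qPochhammer_zero, reducedCoeff_two_mul, inv_pow]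
    field_simp
    ring

lemma sum_reducedCoeff_div_qPochhammer_two_mul_add_one (u y : K) (N : ℕ) :
    ∑ a ∈ range (2 * N + 2),
        reducedCoeff u y a / qPochhammer (u ^ 2)⁻¹ (u ^ 2)⁻¹ ((2 * N + 1 - a) / 2) =
      -(u * y) * qVandermondeSum (u ^ 2) (u * y ^ 2 * u ^ 2) N := by
  rw [qVandermondeSum, Nat.sum_antidiagonal_eq_sum_range_succ_mk, ← mul_add_one,
    sum_range_two_mul, mul_sum]
  refine sum_congr rfl fun x _ ↦ ?_
  rw [reducedCoeff_two_mul, reducedCoeff_two_mul_add_one,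
    show (2 * N + 1 - 2 * x) / 2 = N - x by lia,
    show (2 * N + 1 - (2 * x + 1)) / 2 = N - x by lia]
  ring

theorem sum_reducedCoeff_div_qPochhammer {y : K} (hu0 : u ≠ 0) (hu : ∀ k ≠ 0, u ^ k ≠ 1)
    (hy : ∀ k, u * y ^ 2 * u ^ 2 * (u ^ 2) ^ k ≠ 1) (n : ℕ) :
    ∑ a ∈ range (n + 1),
        reducedCoeff u y a / qPochhammer (u ^ 2)⁻¹ (u ^ 2)⁻¹ ((n - a) / 2) =
      u ^ (n * (n + 1) / 2) * y ^ n * reducedCoeff u y n := by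
  have vandermonde := qVandermondeSum_eq (pow_ne_zero 2 hu0) (sq_pow_ne_one hu) hy
  obtain ⟨N, rfl | rfl⟩ := Nat.even_or_odd' n
  · rw [sum_reducedCoeff_div_qPochhammer_two_mul hu0 hu, vandermonde, reducedCoeff_two_mul,
      mul_assoc 2, Nat.mul_div_cancel_left _ two_pos, inv_pow]
    field_simp
    ring
  · rw [sum_reducedCoeff_div_qPochhammer_two_mul_add_one, vandermonde, reducedCoeff_two_mul_add_one,
      show (2 * N + 1) * (2 * N + 1 + 1) = 2 * ((2 * N + 1) * (N + 1)) by ring,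
      Nat.mul_div_cancel_left _ two_pos]
    ring

end Reduced

/-- The coefficient `m_{ij}` for `i ≤ j`, in a form common to both parities of `j - i`. -/
def mCoeff (u t : K) (i j : ℕ) : K :=
  (∏ r ∈ Icc (i + 1) j, (u ^ r - 1)) /
    (t ^ i * u ^ (j * (j + 1) / 2) * qPochhammer (u ^ 2)⁻¹ (u ^ 2)⁻¹ ((j - i) / 2))

/-- The coefficient `b_{ij}` for `i ≤ j`, in a form common to both parities of `j - i`. -/
def bCoeff (u t : K) (i j : ℕ) : K :=
  t ^ (j - i) * reducedCoeff u (u ^ i * t) (j - i) * (∏ r ∈ Icc (i + 1) j, (u ^ r - 1)) /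
    (1 - u ^ (i + 1) * t)

section ClosedForms

variable {u : K} {i j : ℕ}

lemma mCoeff_eq_of_sub_div_two_eq (hu0 : u ≠ 0) (t : K) {d : ℕ} (hd : (j - i) / 2 = d) :
    mCoeff u t i j = t ^ (-(i : ℤ)) *
      u ^ (((d * (d + 1) : ℕ) : ℤ) - ((j * (j + 1) / 2 : ℕ) : ℤ)) *
      (∏ r ∈ Icc (i + 1) j, (u ^ r - 1)) / ∏ r ∈ Icc 1 d, (u ^ (2 * r) - 1) := by
  simp only [mCoeff, hd, pow_mul, prod_Icc_sq_pow_sub_one hu0, zpow_sub₀ hu0, zpow_neg,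
    zpow_natCast]
  field_simp

lemma mCoeff_of_even (hu0 : u ≠ 0) (t : K) (h : (j - i) % 2 = 0) :
    mCoeff u t i j = t ^ (-(i : ℤ)) *
      u ^ ((((j - i) * (j - i + 2) / 4 : ℕ) : ℤ) - ((j * (j + 1) / 2 : ℕ) : ℤ)) *
      (∏ r ∈ Icc (i + 1) j, (u ^ r - 1)) / ∏ r ∈ Icc 1 ((j - i) / 2), (u ^ (2 * r) - 1) := by
  obtain ⟨d, hd⟩ := Nat.dvd_of_mod_eq_zero h
  have exponent : (j - i) * (j - i + 2) / 4 = d * (d + 1) := by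
    rw [hd, show 2 * d * (2 * d + 2) = 4 * (d * (d + 1)) by ring]
    exact Nat.mul_div_cancel_left _ four_pos
  have hd' : (j - i) / 2 = d := by lia
  rw [exponent, hd', mCoeff_eq_of_sub_div_two_eq hu0 t hd']

lemma mCoeff_of_odd (hu0 : u ≠ 0) (t : K) (h : (j - i) % 2 = 1) :
    mCoeff u t i j = t ^ (-(i : ℤ)) *
      u ^ (((((j - i) ^ 2 - 1) / 4 : ℕ) : ℤ) - ((j * (j + 1) / 2 : ℕ) : ℤ)) *
      (∏ r ∈ Icc (i + 1) j, (u ^ r - 1)) / ∏ r ∈ Icc 1 ((j - i - 1) / 2), (u ^ (2 * r) - 1) := by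
  obtain ⟨d, hd⟩ := Nat.odd_iff.2 h
  have exponent : ((j - i) ^ 2 - 1) / 4 = d * (d + 1) := by
    rw [hd, show (2 * d + 1) ^ 2 = 4 * (d * (d + 1)) + 1 by ring, Nat.add_sub_cancel]
    exact Nat.mul_div_cancel_left _ four_pos
  rw [exponent, show (j - i - 1) / 2 = d by lia,
    mCoeff_eq_of_sub_div_two_eq hu0 t (show (j - i) / 2 = d by lia)]

lemma prod_Icc_bCoeff_denominator (u t : K) (i d : ℕ) :
    ∏ k ∈ Icc 1 d, ((1 - u ^ (2 * i + 1 + 2 * k) * t ^ 2) * (u ^ (2 * k) - 1)) =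
      (-1) ^ d * (qPochhammer (u ^ 2) (u ^ 2) d *
        qPochhammer (u * (u ^ i * t) ^ 2 * u ^ 2) (u ^ 2) d) := by
  rw [← prod_Icc_one_sub_mul_mul_pow_sub_one]
  exact prod_congr rfl fun k _ ↦ by ring

lemma bCoeff_of_even (u t : K) (hij : i ≤ j) (h : (j - i) % 2 = 0) :
    bCoeff u t i j = (-1) ^ ((j - i) / 2) * t ^ (j - i) * (1 - u ^ (j + 1) * t) *
      (∏ k ∈ Icc (i + 1) j, (u ^ k - 1)) /
      ((1 - u ^ (i + 1) * t) * ∏ k ∈ Icc 1 ((j - i) / 2),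
        ((1 - u ^ (2 * i + 1 + 2 * k) * t ^ 2) * (u ^ (2 * k) - 1))) := by
  obtain ⟨d, hd⟩ := Nat.dvd_of_mod_eq_zero h
  obtain rfl : j = i + 2 * d := by lia
  rw [bCoeff, Nat.add_sub_cancel_left, Nat.mul_div_cancel_left d two_pos, reducedCoeff_two_mul,
    prod_Icc_bCoeff_denominator]
  field_simp
  ring_nf

lemma bCoeff_of_odd (u t : K) (h : (j - i) % 2 = 1) :
    bCoeff u t i j = (-1) ^ ((j - i + 1) / 2) * t ^ (j - i) *
      (∏ k ∈ Icc (i + 1) j, (u ^ k - 1)) /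
      ((1 - u ^ (i + 1) * t) * ∏ k ∈ Icc 1 ((j - i - 1) / 2),
        ((1 - u ^ (2 * i + 1 + 2 * k) * t ^ 2) * (u ^ (2 * k) - 1))) := by
  obtain ⟨d, hd⟩ := Nat.odd_iff.2 h
  rw [bCoeff, hd, show (2 * d + 1 + 1) / 2 = d + 1 by lia, show (2 * d + 1 - 1) / 2 = d by lia,
    reducedCoeff_two_mul_add_one, prod_Icc_bCoeff_denominator]
  field_simp
  ring_nf

end ClosedForms

lemma bCoeff_self {u t : K} {i : ℕ} (h : u ^ (i + 1) * t ≠ 1) : bCoeff u t i i = 1 := by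
  have hne : 1 - u ^ (i + 1) * t ≠ 0 := sub_ne_zero.2 h.symm
  simp [bCoeff, reducedCoeff, ← mul_assoc, ← pow_succ', hne]

lemma mCoeff_mul_bCoeff (u : K) {t : K} (ht0 : t ≠ 0) {i j k : ℕ} (hik : i ≤ k) (hkj : k ≤ j) :
    mCoeff u t k j * bCoeff u t i k =
      (∏ r ∈ Icc (i + 1) j, (u ^ r - 1)) /
        (t ^ i * u ^ (j * (j + 1) / 2) * (1 - u ^ (i + 1) * t)) *
      (reducedCoeff u (u ^ i * t) (k - i) / qPochhammer (u ^ 2)⁻¹ (u ^ 2)⁻¹ ((j - k) / 2)) := by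
  have telescope : (∏ r ∈ Icc (i + 1) k, (u ^ r - 1)) * ∏ r ∈ Icc (k + 1) j, (u ^ r - 1) =
      ∏ r ∈ Icc (i + 1) j, (u ^ r - 1) := by
    simp only [Icc_add_one_left_eq_Ioc, prod_Ioc_consecutive _ hik hkj]
  have ht : t ^ k = t ^ i * t ^ (k - i) := by rw [← pow_add, Nat.add_sub_cancel' hik]
  rw [mCoeff, bCoeff, ← telescope, ht]
  field_simp

section Recursion

variable {u t : K} {i j : ℕ}

lemma sum_mCoeff_mul_bCoeff (hu0 : u ≠ 0) (ht0 : t ≠ 0) (hu : ∀ k ≠ 0, u ^ k ≠ 1)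
    (hut : ∀ k, u ^ (2 * k + 3) * t ^ 2 ≠ 1) (hij : i ≤ j) :
    ∑ k ∈ Ico i j, mCoeff u t k j * bCoeff u t i k =
      (∏ r ∈ Icc (i + 1) j, (u ^ r - 1)) /
        (t ^ i * u ^ (j * (j + 1) / 2) * (1 - u ^ (i + 1) * t)) *
      ((u ^ ((j - i) * (j + i + 1) / 2) * t ^ (j - i) - 1) *
        reducedCoeff u (u ^ i * t) (j - i)) := by
  obtain ⟨n, rfl⟩ := Nat.exists_eq_add_of_le hij
  have hy : ∀ k, u * (u ^ i * t) ^ 2 * u ^ 2 * (u ^ 2) ^ k ≠ 1 := fun k ↦ by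
    convert hut (i + k) using 1
    ring
  have reduced := sum_reducedCoeff_div_qPochhammer hu0 hu hy n
  rw [sum_range_succ, Nat.sub_self, Nat.zero_div, qPochhammer_zero, div_one] at reduced
  have multiplier : u ^ (n * (i + n + i + 1) / 2) * t ^ n =
      u ^ (n * (n + 1) / 2) * (u ^ i * t) ^ n := by
    rw [show n * (i + n + i + 1) = n * (n + 1) + i * n * 2 by ring,
      Nat.add_mul_div_right _ _ two_pos]
    ring
  rw [sum_Ico_eq_sum_range, Nat.add_sub_cancel_left, multiplier, sub_one_mul, ← reduced,
    add_sub_cancel_right, mul_sum]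
  refine sum_congr rfl fun a ha ↦ ?_
  rw [mCoeff_mul_bCoeff u ht0 (Nat.le_add_right i a)
    (Nat.add_le_add_left (mem_range.1 ha).le i), Nat.add_sub_cancel_left, Nat.add_sub_add_left]

theorem bCoeff_eq_sum (hu0 : u ≠ 0) (ht0 : t ≠ 0) (hu : ∀ k ≠ 0, u ^ k ≠ 1)
    (hut : ∀ k, u ^ (2 * k + 3) * t ^ 2 ≠ 1) (hij : i ≤ j)
    (hne : u ^ ((j - i) * (j + i + 1) / 2) * t ^ (j - i) ≠ 1) :
    bCoeff u t i j =
      t ^ j * u ^ (j * (j + 1) / 2) / (u ^ ((j - i) * (j + i + 1) / 2) * t ^ (j - i) - 1) *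
        ∑ k ∈ Ico i j, mCoeff u t k j * bCoeff u t i k := by
  have ht : t ^ j = t ^ i * t ^ (j - i) := by rw [← pow_add, Nat.add_sub_cancel' hij]
  have hsub := sub_ne_zero.2 hne
  rw [sum_mCoeff_mul_bCoeff hu0 ht0 hu hut hij, bCoeff, ht]
  generalize u ^ ((j - i) * (j + i + 1) / 2) * t ^ (j - i) - 1 = X at *
  field_simp

end Recursion

theorem b_chi0_solves_recursion_general {u t : K} (hu0 : u ≠ 0) (ht0 : t ≠ 0)
    (hu : ∀ k ≠ 0, u ^ k ≠ 1) (hut : ∀ i, u ^ (i + 1) * t ≠ 1)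
    (hut_sq : ∀ k, u ^ (2 * k + 3) * t ^ 2 ≠ 1)
    (hut_pow : ∀ i j, i < j → u ^ ((j - i) * (j + i + 1) / 2) * t ^ (j - i) ≠ 1)
    (m b : ℕ → ℕ → K)
    (hm_even : ∀ i j : ℕ, i ≤ j → (j - i) % 2 = 0 →
      m i j = t ^ (-(i : ℤ)) *
        u ^ ((((j - i) * (j - i + 2) / 4 : ℕ) : ℤ) - ((j * (j + 1) / 2 : ℕ) : ℤ)) *
        (∏ r ∈ Icc (i + 1) j, (u ^ r - 1)) /
        ∏ r ∈ Icc 1 ((j - i) / 2), (u ^ (2 * r) - 1))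
    (hm_odd : ∀ i j : ℕ, i ≤ j → (j - i) % 2 = 1 →
      m i j = t ^ (-(i : ℤ)) *
        u ^ (((((j - i) ^ 2 - 1) / 4 : ℕ) : ℤ) - ((j * (j + 1) / 2 : ℕ) : ℤ)) *
        (∏ r ∈ Icc (i + 1) j, (u ^ r - 1)) /
        ∏ r ∈ Icc 1 ((j - i - 1) / 2), (u ^ (2 * r) - 1))
    (hb_even : ∀ i j : ℕ, i ≤ j → (j - i) % 2 = 0 →
      b i j = (-1) ^ ((j - i) / 2) * t ^ (j - i) * (1 - u ^ (j + 1) * t) *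
        (∏ k ∈ Icc (i + 1) j, (u ^ k - 1)) /
        ((1 - u ^ (i + 1) * t) *
          ∏ k ∈ Icc 1 ((j - i) / 2),
            ((1 - u ^ (2 * i + 1 + 2 * k) * t ^ 2) * (u ^ (2 * k) - 1))))
    (hb_odd : ∀ i j : ℕ, i ≤ j → (j - i) % 2 = 1 →
      b i j = (-1) ^ ((j - i + 1) / 2) * t ^ (j - i) *
        (∏ k ∈ Icc (i + 1) j, (u ^ k - 1)) /
        ((1 - u ^ (i + 1) * t) *
          ∏ k ∈ Icc 1 ((j - i - 1) / 2),
            ((1 - u ^ (2 * i + 1 + 2 * k) * t ^ 2) * (u ^ (2 * k) - 1)))) :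
    (∀ i, b i i = 1) ∧
    ∀ i j, i < j →
      b i j = t ^ j * u ^ (j * (j + 1) / 2) /
          (u ^ ((j - i) * (j + i + 1) / 2) * t ^ (j - i) - 1) *
        ∑ k ∈ Ico i j, m k j * b i k := by
  have hm : ∀ i j, i ≤ j → m i j = mCoeff u t i j := fun i j hij ↦ by
    obtain h | h := Nat.mod_two_eq_zero_or_one (j - i)
    · rw [hm_even i j hij h, mCoeff_of_even hu0 t h]
    · rw [hm_odd i j hij h, mCoeff_of_odd hu0 t h]
  have hb : ∀ i j, i ≤ j → b i j = bCoeff u t i j := fun i j hij ↦ by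
    obtain h | h := Nat.mod_two_eq_zero_or_one (j - i)
    · rw [hb_even i j hij h, bCoeff_of_even u t hij h]
    · rw [hb_odd i j hij h, bCoeff_of_odd u t h]
  refine ⟨fun i ↦ (hb i i le_rfl).trans (bCoeff_self (hut i)), fun i j hij ↦ ?_⟩
  rw [hb i j hij.le, bCoeff_eq_sum hu0 ht0 hu hut_sq hij.le (hut_pow i j hij)]
  congr 1
  refine sum_congr rfl fun k hk ↦ ?_
  obtain ⟨hik, hkj⟩ := mem_Ico.1 hk
  rw [hm k j hkj.le, hb i k hik]

end Field

lemma U_ne_zero : U ≠ 0 :=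
  IsFractionRing.to_map_eq_zero_iff.not.2 (MvPolynomial.X_ne_zero 0)

lemma T_ne_zero : T ≠ 0 :=
  IsFractionRing.to_map_eq_zero_iff.not.2 (MvPolynomial.X_ne_zero 1)

lemma U_pow_mul_T_pow_ne_one {a b : ℕ} (h : a + b ≠ 0) : U ^ a * T ^ b ≠ 1 := by
  intro heq
  simp only [U, T, ← map_pow, ← map_mul] at heq
  have hX : (MvPolynomial.X 0 ^ a * MvPolynomial.X 1 ^ b : MvPolynomial (Fin 2) ℚ) = 1 :=
    IsFractionRing.injective _ Fut (heq.trans (map_one _).symm)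
  have heval : (2 : ℚ) ^ (a + b) = 1 := by
    simpa [pow_add] using congrArg (MvPolynomial.eval fun _ ↦ (2 : ℚ)) hX
  exact (one_lt_pow₀ one_lt_two h).ne' heval

/-- The closed formulas for `b_{χ₀}(s)_{ij}` solve the defining recursion of the
coefficients of the `U(p)`-eigenfunction decomposition of Siegel Eisenstein series
for the trivial character (under `u = p`, `t = p^{−s}`). -/
theorem b_chi0_solves_recursion (m b : ℕ → ℕ → Fut)
    -- m_{ij} for i ≤ j with j − i even
    (hm_even : ∀ i j : ℕ, i ≤ j → (j - i) % 2 = 0 →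
      m i j = T ^ (-(i : ℤ)) *
        U ^ ((((j - i) * (j - i + 2) / 4 : ℕ) : ℤ) - ((j * (j + 1) / 2 : ℕ) : ℤ)) *
        (∏ r ∈ Finset.Icc (i + 1) j, (U ^ r - 1)) /
        ∏ r ∈ Finset.Icc 1 ((j - i) / 2), (U ^ (2 * r) - 1))
    -- m_{ij} for i ≤ j with j − i odd
    (hm_odd : ∀ i j : ℕ, i ≤ j → (j - i) % 2 = 1 →
      m i j = T ^ (-(i : ℤ)) *
        U ^ (((((j - i) ^ 2 - 1) / 4 : ℕ) : ℤ) - ((j * (j + 1) / 2 : ℕ) : ℤ)) *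
        (∏ r ∈ Finset.Icc (i + 1) j, (U ^ r - 1)) /
        ∏ r ∈ Finset.Icc 1 ((j - i - 1) / 2), (U ^ (2 * r) - 1))
    -- b_{ij} = 0 for i > j
    (hb_zero : ∀ i j : ℕ, j < i → b i j = 0)
    -- b_{ij} for i ≤ j with j − i even
    (hb_even : ∀ i j : ℕ, i ≤ j → (j - i) % 2 = 0 →
      b i j = (-1 : Fut) ^ ((j - i) / 2) * T ^ (j - i) * (1 - U ^ (j + 1) * T) *
        (∏ k ∈ Finset.Icc (i + 1) j, (U ^ k - 1)) /
        ((1 - U ^ (i + 1) * T) *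
          ∏ k ∈ Finset.Icc 1 ((j - i) / 2),
            ((1 - U ^ (2 * i + 1 + 2 * k) * T ^ 2) * (U ^ (2 * k) - 1))))
    -- b_{ij} for i ≤ j with j − i odd
    (hb_odd : ∀ i j : ℕ, i ≤ j → (j - i) % 2 = 1 →
      b i j = (-1 : Fut) ^ ((j - i + 1) / 2) * T ^ (j - i) *
        (∏ k ∈ Finset.Icc (i + 1) j, (U ^ k - 1)) /
        ((1 - U ^ (i + 1) * T) *
          ∏ k ∈ Finset.Icc 1 ((j - i - 1) / 2),
            ((1 - U ^ (2 * i + 1 + 2 * k) * T ^ 2) * (U ^ (2 * k) - 1)))) :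
    (∀ i : ℕ, b i i = 1) ∧
    (∀ i j : ℕ, i < j →
      b i j = (T ^ j * U ^ (j * (j + 1) / 2) / (U ^ ((j - i) * (j + i + 1) / 2) * T ^ (j - i) - 1)) *
        ∑ k ∈ Finset.Ico i j, m k j * b i k) :=
  b_chi0_solves_recursion_general U_ne_zero T_ne_zero
    (fun k hk ↦ by simpa using U_pow_mul_T_pow_ne_one (b := 0) hk)
    (fun i ↦ by simpa using U_pow_mul_T_pow_ne_one (b := 1) i.succ.succ_ne_zero)
    (fun k ↦ U_pow_mul_T_pow_ne_one (by lia)) (fun i j hij ↦ U_pow_mul_T_pow_ne_one (by lia))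
    m b hm_even hm_odd hb_even hb_odd
end

section
/- Let n ≥ 1 be an odd integer and let a, b be nonnegative integers with a + b = n. For s ∈ ℂ set g(s) = Γ*_{(n+1)/2}((s+1)/2) · Γ*_{(n−1)/2}((s−1)/2) / (Γ*_a((s+1)/2) · Γ*_b((s−1)/2)). Then for every s ∈ ℂ such that for every integer j with −1 ≤ j ≤ n + 2 neither (s − j)/2 nor (n + 1 − s − j)/2 is a nonpositive integer (so that no Gamma factor involved vanishes or has a pole), one has g(n + 1 − s) = (−1)^{((a−b−2)^2 − 1)/8} · g(s). (Note that a − b is odd, so ((a−b−2)^2 − 1)/8 is an integer.) -/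
/-- `Γ*_r(s) = ∏_{j=0}^{r−1} Γ(s − j/2)`, with `Γ*_0(s) = 1`. -/
noncomputable def GammaStar (r : ℕ) (s : ℂ) : ℂ :=
  ∏ j ∈ Finset.range r, Complex.Gamma (s - (j : ℂ) / 2)

/-!
Put `n = 2k + 1` and `w = (s - k) / 2`, so that `s ↦ n + 1 - s` becomes `w ↦ 1 - w`. Cancelling the
common Gamma factors of numerator and denominator leaves
`g(s) = ∏ i, Γ(w + i/2) / Γ(w - i/2)`, where `i` runs over `0, …, d - 1` if `a = k + 1 + d`, and
over `1, …, d` if `a = k + 1 - d`. By Euler's reflection formula and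
`sin (π (w + i/2)) = (-1)^i sin (π (w - i/2))`, the `i`-th factor picks up the sign `(-1)^i` under
`w ↦ 1 - w`; the indices `i` add up to `((a - b - 2)² - 1) / 8`.
-/

open Complex Finset

section Reflection

lemma Gamma_mul_Gamma_one_sub_add_int (z : ℂ) (m : ℤ) :
    Gamma (z + m) * Gamma (1 - (z + m)) = (-1) ^ m * (Gamma z * Gamma (1 - z)) := by
  have sin_shift : sin (Real.pi * (z + m)) = (-1) ^ m * sin (Real.pi * z) := by
    rw [mul_add, mul_comm (Real.pi : ℂ) m, sin_antiperiodic.add_int_mul_eq, Int.cast_negOnePow]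
  have sign_inv : ((-1 : ℂ) ^ m)⁻¹ = (-1) ^ m := by
    rw [← inv_zpow, inv_neg_one]
  rw [Gamma_mul_Gamma_one_sub, Gamma_mul_Gamma_one_sub, sin_shift, div_mul_eq_div_div_swap,
    div_eq_mul_inv _ ((-1 : ℂ) ^ m), sign_inv, mul_comm]

lemma Gamma_div_Gamma_one_sub {w : ℂ} {i : ℕ} (hw : Gamma (w - i / 2) ≠ 0)
    (hw' : Gamma (1 - w - i / 2) ≠ 0) :
    Gamma (1 - w + i / 2) / Gamma (1 - w - i / 2) =
      (-1) ^ i * (Gamma (w + i / 2) / Gamma (w - i / 2)) := by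
  have reflection := Gamma_mul_Gamma_one_sub_add_int (w + i / 2) (-i)
  rw [show w + i / 2 + ((-i : ℤ) : ℂ) = w - i / 2 by push_cast; ring,
    show 1 - (w - i / 2) = 1 - w + i / 2 by ring,
    show 1 - (w + i / 2) = 1 - w - i / 2 by ring,
    zpow_neg, zpow_natCast, ← inv_pow, inv_neg_one] at reflection
  rw [← mul_div_assoc, div_eq_div_iff hw' hw]
  linear_combination reflection

end Reflection

section GammaStar

lemma GammaStar_add (r d : ℕ) (z : ℂ) :
    GammaStar (r + d) z = GammaStar r z * GammaStar d (z - r / 2) := by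
  simp only [GammaStar, prod_range_add, Nat.cast_add, add_div, sub_sub]

lemma GammaStar_eq_prod_add (d : ℕ) (z : ℂ) :
    GammaStar d (z + (d - 1) / 2) = ∏ i ∈ range d, Gamma (z + i / 2) := by
  rw [GammaStar, ← prod_range_reflect]
  refine prod_congr rfl fun i hi ↦ ?_
  have cast_index : ((d - 1 - i : ℕ) : ℂ) = d - 1 - i := by
    rw [Nat.sub_sub, Nat.cast_sub (by grind)]
    push_cast
    ring
  rw [cast_index]
  ring_nf

lemma GammaStar_half_ne_zero {r : ℕ} {p : ℤ} {z : ℂ}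
    (hz : ∀ j : ℤ, p ≤ j → j < p + r → ∀ m : ℤ, m ≤ 0 → (z - j) / 2 ≠ m) :
    GammaStar r ((z - p) / 2) ≠ 0 := by
  refine prod_ne_zero_iff.mpr fun j hj ↦ Gamma_ne_zero fun m ↦ ?_
  have not_pole := hz (p + j) (by lia) (by grind) (-m) (by lia)
  push_cast at not_pole
  rwa [← sub_div, sub_sub]

lemma GammaStar_mul_div_mul_add {p r d : ℕ} {y z : ℂ} (hz : GammaStar p z ≠ 0)
    (hy : GammaStar r y ≠ 0) :
    GammaStar (p + d) z * GammaStar r y / (GammaStar p z * GammaStar (r + d) y) =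
      GammaStar d (z - p / 2) / GammaStar d (y - r / 2) := by
  rw [GammaStar_add p, GammaStar_add r]
  field_simp

end GammaStar

section GammaQuotient

/-- The product of `Γ(w + i/2) / Γ(w - i/2)` over `c ≤ i < c + d`, which is what remains of the
Gamma factor of a symmetric matrix after cancellation, with `c` being `0` or `1`. -/
noncomputable def gammaQuotient (c d : ℕ) (w : ℂ) : ℂ :=
  ∏ i ∈ range d, Gamma (w + (c + i : ℕ) / 2) / Gamma (w - (c + i : ℕ) / 2)

lemma GammaStar_div_GammaStar_eq_gammaQuotient (c d : ℕ) (w : ℂ) :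
    GammaStar d (w + (c + d - 1) / 2) / GammaStar d (w - c / 2) = gammaQuotient c d w := by
  rw [show w + ((c : ℂ) + d - 1) / 2 = w + c / 2 + (d - 1) / 2 by ring, GammaStar_eq_prod_add]
  simp only [GammaStar, gammaQuotient, prod_div_distrib, Nat.cast_add, add_div, add_assoc, sub_sub]

lemma gammaQuotient_one_sub {c d : ℕ} {w : ℂ} (hw : GammaStar d (w - c / 2) ≠ 0)
    (hw' : GammaStar d (1 - w - c / 2) ≠ 0) :
    gammaQuotient c d (1 - w) = (-1) ^ (∑ i ∈ range d, (c + i)) * gammaQuotient c d w := by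
  have factor_ne_zero {v : ℂ} (hv : GammaStar d (v - c / 2) ≠ 0) {i : ℕ} (hi : i ∈ range d) :
      Gamma (v - (c + i : ℕ) / 2) ≠ 0 := by
    simpa only [Nat.cast_add, add_div, sub_sub] using prod_ne_zero_iff.mp hv i hi
  rw [gammaQuotient, gammaQuotient, ← prod_pow_eq_pow_sum, ← prod_mul_distrib]
  exact prod_congr rfl fun i hi ↦
    Gamma_div_Gamma_one_sub (factor_ne_zero hw hi) (factor_ne_zero hw' hi)

lemma eight_mul_sum_range_add (c d : ℕ) :
    8 * ((∑ i ∈ range d, (c + i) : ℕ) : ℤ) = (2 * (c + d) - 1) ^ 2 - (2 * c - 1) ^ 2 := by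
  induction d with
  | zero => simp
  | succ d ih =>
    rw [sum_range_succ]
    push_cast at ih ⊢
    linear_combination ih

end GammaQuotient

section GammaFactor

/-- The archimedean Gamma factor `g(s)` of a nondegenerate half-integral symmetric matrix of odd
size `2k + 1` and signature `(a, b)`. The size is recorded through `k`, which turns the indices
`(n + 1) / 2` and `(n - 1) / 2` of the numerator into `k + 1` and `k`. -/
noncomputable def gammaFactor (k a b : ℕ) (s : ℂ) : ℂ :=
  GammaStar (k + 1) ((s + 1) / 2) * GammaStar k ((s - 1) / 2) /
    (GammaStar a ((s + 1) / 2) * GammaStar b ((s - 1) / 2))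

variable {k a b d : ℕ} {s : ℂ}

lemma gammaFactor_eq_gammaQuotient_zero (hbd : b + d = k)
    (hk : GammaStar (k + 1) ((s + 1) / 2) ≠ 0) (hb : GammaStar b ((s - 1) / 2) ≠ 0) :
    gammaFactor k (k + 1 + d) b s = gammaQuotient 0 d ((s - k) / 2) := by
  subst hbd
  rw [gammaFactor, mul_comm (GammaStar (b + d + 1) _), mul_comm (GammaStar (b + d + 1 + d) _),
    GammaStar_mul_div_mul_add hb hk, ← GammaStar_div_GammaStar_eq_gammaQuotient]
  push_cast
  ring_nf

lemma gammaFactor_eq_gammaQuotient_one (had : a + d = k + 1)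
    (ha : GammaStar a ((s + 1) / 2) ≠ 0) (hk : GammaStar k ((s - 1) / 2) ≠ 0) :
    gammaFactor k a (k + d) s = gammaQuotient 1 d ((s - k) / 2) := by
  have cast_k : (k : ℂ) = a + d - 1 := by
    rw [eq_sub_iff_add_eq]
    exact_mod_cast had.symm
  rw [gammaFactor, ← had, GammaStar_mul_div_mul_add ha hk,
    ← GammaStar_div_GammaStar_eq_gammaQuotient, cast_k]
  push_cast
  ring_nf

lemma exists_gammaFactor_eq_gammaQuotient (hab : a + b = 2 * k + 1) :
    ∃ c d : ℕ, ((a : ℤ) - b - 2) ^ 2 - 1 = 8 * (∑ i ∈ range d, (c + i) : ℕ) ∧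
      ∀ s : ℂ, GammaStar a ((s + 1) / 2) ≠ 0 → GammaStar b ((s - 1) / 2) ≠ 0 →
        gammaFactor k a b s = gammaQuotient c d ((s - k) / 2) ∧
          GammaStar d ((s - k) / 2 - c / 2) ≠ 0 := by
  rcases le_total (k + 1) a with hka | hka
  · obtain ⟨d, rfl⟩ := exists_add_of_le hka
    obtain rfl : k = b + d := by lia
    refine ⟨0, d, ?_, fun s ha hb ↦ ?_⟩
    · rw [eight_mul_sum_range_add]
      push_cast
      ring
    · rw [GammaStar_add, mul_ne_zero_iff] at ha
      refine ⟨gammaFactor_eq_gammaQuotient_zero rfl ha.1 hb, ?_⟩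
      convert ha.2 using 2
      push_cast
      ring
  · obtain ⟨d, had⟩ := exists_add_of_le hka
    obtain rfl : b = k + d := by lia
    refine ⟨1, d, ?_, fun s ha hb ↦ ?_⟩
    · rw [eight_mul_sum_range_add, show (a : ℤ) = k + 1 - d by lia]
      push_cast
      ring
    · rw [GammaStar_add, mul_ne_zero_iff] at hb
      refine ⟨gammaFactor_eq_gammaQuotient_one had.symm ha hb.1, ?_⟩
      convert hb.2 using 2
      push_cast
      ring

theorem gammaFactor_two_mul_add_two_sub (hab : a + b = 2 * k + 1)
    (ha : GammaStar a ((s + 1) / 2) ≠ 0) (hb : GammaStar b ((s - 1) / 2) ≠ 0)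
    (ha' : GammaStar a ((2 * k + 2 - s + 1) / 2) ≠ 0)
    (hb' : GammaStar b ((2 * k + 2 - s - 1) / 2) ≠ 0) :
    gammaFactor k a b (2 * k + 2 - s) =
      (-1) ^ ((((a : ℤ) - b - 2) ^ 2 - 1) / 8) * gammaFactor k a b s := by
  obtain ⟨c, d, exponent, factor_eq⟩ := exists_gammaFactor_eq_gammaQuotient hab
  obtain ⟨eq_at_s, ne_zero_at_s⟩ := factor_eq s ha hb
  obtain ⟨eq_at_reflected, ne_zero_at_reflected⟩ := factor_eq _ ha' hb'
  have reflect : (2 * k + 2 - s - k) / 2 = 1 - (s - k) / 2 := by ring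
  rw [reflect] at eq_at_reflected ne_zero_at_reflected
  rw [eq_at_s, eq_at_reflected, exponent, Int.mul_ediv_cancel_left _ (by norm_num), zpow_natCast,
    gammaQuotient_one_sub ne_zero_at_s ne_zero_at_reflected]

end GammaFactor

/-- Lemma 3.3(2): for odd `n = a + b`, the Gamma factor
`g(s) = Γ*_{(n+1)/2}((s+1)/2)·Γ*_{(n−1)/2}((s−1)/2)/(Γ*_a((s+1)/2)·Γ*_b((s−1)/2))`
satisfies `g(n+1−s) = (−1)^{((a−b−2)²−1)/8}·g(s)` whenever no involved Gamma factor
vanishes or has a pole. -/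
theorem gamma_factor_FE_odd_p3 (n : ℕ) (hn : 1 ≤ n) (hodd : Odd n)
    (a b : ℕ) (hab : a + b = n) (g : ℂ → ℂ)
    (hg : ∀ s : ℂ, g s =
      GammaStar ((n + 1) / 2) ((s + 1) / 2) * GammaStar ((n - 1) / 2) ((s - 1) / 2) /
        (GammaStar a ((s + 1) / 2) * GammaStar b ((s - 1) / 2)))
    (s : ℂ)
    (hs : ∀ j : ℤ, -1 ≤ j → j ≤ (n : ℤ) + 2 → ∀ m : ℤ, m ≤ 0 →
      (s - (j : ℂ)) / 2 ≠ (m : ℂ) ∧ ((n : ℂ) + 1 - s - (j : ℂ)) / 2 ≠ (m : ℂ)) :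
    g ((n : ℂ) + 1 - s) = (-1 : ℂ) ^ ((((a : ℤ) - (b : ℤ) - 2) ^ 2 - 1) / 8) * g s := by
  obtain ⟨k, rfl⟩ := hodd
  have g_eq (z : ℂ) : g z = gammaFactor k a b z := by
    rw [hg, gammaFactor, show (2 * k + 1 + 1) / 2 = k + 1 by lia, Nat.add_sub_cancel,
      Nat.mul_div_cancel_left k two_pos]
  have denominators_ne_zero {z : ℂ} (hz : ∀ j : ℤ, -1 ≤ j → j ≤ ((2 * k + 1 : ℕ) : ℤ) + 2 →
      ∀ m : ℤ, m ≤ 0 → (z - j) / 2 ≠ m) :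
      GammaStar a ((z + 1) / 2) ≠ 0 ∧ GammaStar b ((z - 1) / 2) ≠ 0 := by
    constructor
    · simpa using GammaStar_half_ne_zero (r := a) (p := -1) fun j hj hj' ↦ hz j hj (by lia)
    · simpa using GammaStar_half_ne_zero (r := b) (p := 1) fun j hj hj' ↦ hz j (by lia) (by lia)
  have reflect : ((2 * k + 1 : ℕ) : ℂ) + 1 - s = 2 * k + 2 - s := by
    push_cast
    ring
  obtain ⟨ha, hb⟩ := denominators_ne_zero fun j hj hj' m hm ↦ (hs j hj hj' m hm).1
  obtain ⟨ha', hb'⟩ := denominators_ne_zero fun j hj hj' m hm ↦ (hs j hj hj' m hm).2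
  rw [reflect] at ha' hb' ⊢
  rw [g_eq, g_eq, gammaFactor_two_mul_add_two_sub hab ha hb ha' hb']
end
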